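/- Let k be a field of characteristic 0 and 1 ≤ t ≤ m ≤ n. Then J_t(m,n) is generated in degrees ≤ m(m+t) − m − ⌊m²/t⌋ + 1; that is, every minimal generator of the ideal of relations among the t-minors of a generic m×n matrix has degree at most m(m+t) − m − ⌊m²/t⌋ + 1. -/

import Mathlib

open MvPolynomial

/-- The `t`-minor `[I|J]` of the generic `m × n` matrix. -/
noncomputable def genericMinor (k : Type*) [CommRing k] (m n t : ℕ)
    (I : Finset (Fin m)) (J : Finset (Fin n)) (hI : I.card = t) (hJ : J.card = t) :
    MvPolynomial (Fin m × Fin n) k :=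
  Matrix.det (Matrix.of fun a b : Fin t =>
    MvPolynomial.X ((↑(I.orderIsoOfFin hI a) : Fin m), (↑(J.orderIsoOfFin hJ b) : Fin n)))

/-- Index set for the `t`-minors of an `m × n` matrix: pairs `(I, J)` of a `t`-element set
of rows and a `t`-element set of columns. -/
def MinorIndex (t m n : ℕ) : Type :=
  {p : Finset (Fin m) × Finset (Fin n) // p.1.card = t ∧ p.2.card = t}

/-- The presentation map `π : S_t(m,n) → R(m,n)`, sending the indeterminate `y_{I,J}`
to the `t`-minor `[I|J]`. -/
noncomputable def minorPresentation (k : Type*) [CommRing k] (t m n : ℕ) :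
    MvPolynomial (MinorIndex t m n) k →ₐ[k] MvPolynomial (Fin m × Fin n) k :=
  MvPolynomial.aeval fun p => genericMinor k m n t p.1.1 p.1.2 p.2.1 p.2.2

/-- `J_t(m,n)`: the ideal of relations of the `t`-minors of the generic `m × n` matrix. -/
noncomputable def minorRelations (k : Type*) [CommRing k] (t m n : ℕ) :
    Ideal (MvPolynomial (MinorIndex t m n) k) :=
  RingHom.ker (minorPresentation k t m n).toRingHom

/-- An ideal of a polynomial ring is generated in degrees `≤ D` if it is generated by its
elements of total degree at most `D`. -/
def GeneratedInDegreesLE {k σ : Type*} [CommRing k]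
    (I : Ideal (MvPolynomial σ k)) (D : ℕ) : Prop :=
  I = Ideal.span {x | x ∈ I ∧ x.totalDegree ≤ D}

/-!
A linear functional `ψ` on the polynomial ring in the `t`-minors which kills all multiples of the
relations of degree `d` also kills the relations of degree `d + 1`, provided that `3 ≤ d`. Hence
the relations are generated in degrees `≤ 3`. For `t = 1` there are no relations, and for
`2 ≤ t` the bound is at least `3`.

To see this, attach to a pair of words of length `t * (d + 1)` over an alphabet of `d + 1` letters,
both with every letter occurring `t` times, the product of the minors whose rows and columns are
the positions of the individual letters. The values of `ψ` on the corresponding products of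
variables form a matrix indexed by words. Recoloring one position of a word from the letter `a` to
the letter `a'` is the action of an elementary matrix of `𝔤𝔩` on a tensor power. To check that the
matrix of `ψ` commutes with it, one only needs words whose weight is balanced up to one root, so at
most three letters are involved. Any fourth letter is untouched: its minor can be cancelled from
the identity to be proved, which leaves a relation of degree `d`. By the double centralizer theorem
the matrix of `ψ` is then a linear combination of place permutations, and averaging over the
permutations of the rows and of the columns yields a functional `β` on the polynomial ring in the
matrix entries such that `ψ` is the composition of `β` with the presentation map in degree `d + 1`.
-/

/-! ### The double centralizer theorem for permutation representations -/

section SumSingle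

variable {R Ω κ : Type*} [Semiring R] [Fintype Ω] [DecidableEq Ω] [Fintype κ]

theorem mul_sum_single_apply (Z : Matrix Ω Ω R) (f g : κ → Ω) (u v : Ω) :
    (Z * ∑ i, Matrix.single (f i) (g i) (1 : R)) u v = ∑ i, if g i = v then Z u (f i) else 0 := by
  rw [Matrix.mul_sum, Matrix.sum_apply]
  simp [Matrix.mul_apply, Matrix.single_apply, ite_and]

theorem sum_single_mul_apply (Z : Matrix Ω Ω R) (f g : κ → Ω) (u v : Ω) :
    ((∑ i, Matrix.single (f i) (g i) (1 : R)) * Z) u v = ∑ i, if f i = u then Z (g i) v else 0 := by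
  rw [Matrix.sum_mul, Matrix.sum_apply]
  simp [Matrix.mul_apply, Matrix.single_apply, ite_and]

end SumSingle

section DoubleCentralizer

variable {k G : Type*} [Field k] [Group G]

theorem exists_asAlgebraHom_eq_of_commute [Finite G] [NeZero (Nat.card G : k)] {V : Type*}
    [AddCommGroup V] [Module k V] [FiniteDimensional k V] (ρ : Representation k G V)
    (f : Module.End k V) (hf : ∀ T : Module.End k V, (∀ g, Commute T (ρ g)) → Commute f T) :
    ∃ a : MonoidAlgebra k G, ρ.asAlgebraHom a = f := by
  classical
  let e := ρ.asModuleEquiv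
  have hcomm (T : Module.End (MonoidAlgebra k G) ρ.asModule) (x : V) :
      f (e (T (e.symm x))) = e (T (e.symm (f x))) := by
    refine LinearMap.congr_fun (hf (e.conj (T.restrictScalars k)) fun g => ?_) x
    ext y
    have hT : T (e.symm (ρ g y)) = MonoidAlgebra.of k G g • T (e.symm y) := by
      rw [Representation.asModuleEquiv_symm_map_rho, map_smul]
    simpa [e, LinearEquiv.conj_apply, Representation.asModuleEquiv_map_smul] using! congr(e $hT)
  let F : Module.End (Module.End (MonoidAlgebra k G) ρ.asModule) ρ.asModule :=
    { e.symm.conj f with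
      map_smul' := fun T x => by
        simpa [LinearEquiv.conj_apply] using! congr(e.symm $(hcomm T (e x))) }
  let b := Module.finBasis k V
  obtain ⟨a, ha⟩ := jacobson_density F
    ((Finset.univ.image b).map e.symm.toEquiv.toEmbedding)
  refine ⟨a, b.ext fun i => ?_⟩
  have hai : e.symm (f (b i)) = a • e.symm (b i) := by
    simpa [F, LinearEquiv.conj_apply] using! ha (e.symm (b i)) (by simp)
  rw [← e.symm.injective.eq_iff, hai, e.symm_apply_eq, Representation.asModuleEquiv_map_smul,
    e.apply_symm_apply]

variable [Fintype G] {Ω : Type*} [Fintype Ω] [DecidableEq Ω] [MulAction G Ω]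

theorem card_nsmul_eq_sum_smul_sum_single {N : Matrix Ω Ω k}
    (hN : ∀ (g : G) u v, N (g • u) (g • v) = N u v) :
    Fintype.card G • N = ∑ w, ∑ w', N w w' • ∑ g : G, Matrix.single (g • w) (g • w') 1 := by
  have hg (g : G) : N = ∑ w, ∑ w', N w w' • Matrix.single (g • w) (g • w') 1 := by
    conv_lhs => rw [Matrix.matrix_eq_sum_single N]
    rw [← Equiv.sum_comp (MulAction.toPerm g)]
    refine Finset.sum_congr rfl fun w _ => ?_
    rw [← Equiv.sum_comp (MulAction.toPerm g)]
    simp [hN]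
  calc Fintype.card G • N
      = ∑ g : G, ∑ w, ∑ w', N w w' • Matrix.single (g • w) (g • w') 1 := by
        rw [← Finset.sum_congr rfl fun g _ => hg g, Finset.sum_const, Finset.card_univ]
    _ = ∑ w, ∑ w', N w w' • ∑ g : G, Matrix.single (g • w) (g • w') 1 := by
        simp only [Finset.smul_sum]
        rw [Finset.sum_comm]
        exact Finset.sum_congr rfl fun w _ => Finset.sum_comm

variable [NeZero (Nat.card G : k)]

theorem commute_of_commute_sum_single {Z N : Matrix Ω Ω k}
    (hZ : ∀ w w', Commute Z (∑ g : G, Matrix.single (g • w) (g • w') 1))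
    (hN : ∀ (g : G) u v, N (g • u) (g • v) = N u v) : Commute Z N := by
  have hcard : (Fintype.card G : k) ≠ 0 := by
    simpa [Nat.card_eq_fintype_card] using NeZero.ne (Nat.card G : k)
  have h : Commute Z ((Fintype.card G : k) • N) := by
    rw [Nat.cast_smul_eq_nsmul, card_nsmul_eq_sum_smul_sum_single hN]
    exact Commute.sum_right _ _ _ fun w _ => Commute.sum_right _ _ _ fun w' _ =>
      (hZ w w').smul_right _
  simpa [smul_smul, hcard] using h.smul_right (Fintype.card G : k)⁻¹

theorem exists_eq_sum_of_commute_sum_single (Z : Matrix Ω Ω k)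
    (hZ : ∀ w w', Commute Z (∑ g : G, Matrix.single (g • w) (g • w') 1)) :
    ∃ a : G → k, ∀ u v, Z u v = ∑ g : G, if u = g • v then a g else 0 := by
  let ρ : G →* Matrix Ω Ω k := Matrix.permMatrixHom.comp (MulAction.toPermHom G Ω)
  have hρ (g : G) (u v : Ω) : ρ g u v = if u = g • v then 1 else 0 := by
    simp [ρ, PEquiv.toMatrix_apply, inv_smul_eq_iff]
  have hcomm (N : Matrix Ω Ω k) (hN : ∀ g, Commute N (ρ g)) : Commute Z N := by
    refine commute_of_commute_sum_single hZ fun g u v => ?_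
    have := congr_fun₂ (hN g) (g • u) v
    simpa [Matrix.mul_apply, hρ] using this
  obtain ⟨a, ha⟩ := exists_asAlgebraHom_eq_of_commute
    ((Matrix.toLinAlgEquiv' : Matrix Ω Ω k ≃ₐ[k] _).toMonoidHom.comp ρ)
    (Matrix.toLinAlgEquiv' Z) fun T hT => by
      obtain ⟨N, rfl⟩ := Matrix.toLinAlgEquiv'.surjective T
      exact (hcomm N fun g => (hT g).of_map Matrix.toLinAlgEquiv'.injective).map _
  refine ⟨a.coeff, fun u v => ?_⟩
  have hsum : Z = ∑ g, a.coeff g • ρ g := by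
    apply Matrix.toLinAlgEquiv'.injective
    rw [← ha, Representation.asAlgebraHom_def, MonoidAlgebra.lift_apply,
      Finsupp.sum_fintype _ _ (by simp)]
    simp
  rw [hsum]
  simp [Matrix.sum_apply, hρ]

end DoubleCentralizer

/-! ### Words and recolorings -/

theorem update_comp_perm {ι L : Type*} [DecidableEq ι] (v : ι → L) (σ : Equiv.Perm ι) (j : ι)
    (a : L) : Function.update v (σ j) a ∘ σ = Function.update (v ∘ σ) j a := by
  simpa using Function.update_comp_eq_of_injective v σ.injective j a

theorem update_eq_iff_update_eq {ι L : Type*} [DecidableEq ι] {v w : ι → L} {a a' : L} {j : ι} :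
    (w j = a ∧ Function.update w j a' = v) ↔ (v j = a' ∧ Function.update v j a = w) := by
  constructor <;> (rintro ⟨rfl, rfl⟩; simp)

section Words

variable {ι L : Type*} [Fintype ι] [DecidableEq L]

/-- The set of positions at which the word `w : ι → L` has the letter `a`. -/
def fiber (w : ι → L) (a : L) : Finset ι := {i | w i = a}

/-- The word `w` contains every letter exactly `t` times: it has weight `(t, …, t)`. -/
def IsBalanced (t : ℕ) (w : ι → L) : Prop := ∀ x, (fiber w x).card = t

/-- The word `w` has weight `(t, …, t) + ε_a - ε_b`, that is, one letter `a` too many and one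
letter `b` too few. The case `a = b` is allowed and means that `w` is balanced. -/
def HasRootWeight (t : ℕ) (a b : L) (w : ι → L) : Prop :=
  ∀ x, (fiber w x).card + (if x = b then 1 else 0) = t + if x = a then 1 else 0

@[simp]
theorem mem_fiber {w : ι → L} {a : L} {i : ι} : i ∈ fiber w a ↔ w i = a := by simp [fiber]

theorem hasRootWeight_self {t : ℕ} {w : ι → L} {a : L} :
    HasRootWeight t a a w ↔ IsBalanced t w := by simp [HasRootWeight, IsBalanced]

theorem fiber_comp (w : ι → L) (σ : Equiv.Perm ι) (a : L) :
    fiber (w ∘ σ) a = (fiber w a).map σ.symm.toEmbedding := by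
  ext i; simp [Finset.mem_map_equiv]

theorem HasRootWeight.comp {t : ℕ} {w : ι → L} {a b : L} (h : HasRootWeight t a b w)
    (σ : Equiv.Perm ι) : HasRootWeight t a b (w ∘ σ) := fun x => by
  simpa only [fiber_comp, Finset.card_map] using h x

theorem IsBalanced.comp {t : ℕ} {w : ι → L} (h : IsBalanced t w) (σ : Equiv.Perm ι) :
    IsBalanced t (w ∘ σ) := fun x => by
  simpa only [fiber_comp, Finset.card_map] using h x

theorem exists_comp_eq_of_card_fiber_eq {ι' : Type*} [Fintype ι'] {u : ι → L} {v : ι' → L}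
    (h : ∀ x, (fiber u x).card = (fiber v x).card) : ∃ e : ι' ≃ ι, u ∘ e = v := by
  have e (x : L) : {i // v i = x} ≃ {i // u i = x} := Fintype.equivOfCardEq <| by
    rw [Fintype.card_subtype, Fintype.card_subtype]
    exact (h x).symm
  exact ⟨Equiv.ofFiberEquiv e, funext fun i => Equiv.ofFiberEquiv_map e i⟩

theorem exists_ne_of_hasRootWeight {t : ℕ} {a b : L} {w w' : ι → L} (hw : IsBalanced t w)
    (hw' : HasRootWeight t a b w') (hab : a ≠ b) : ∃ i, w' i = a ∧ w i ≠ w' i := by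
  by_contra! h
  have hsub : fiber w' a ⊆ fiber w a := fun i hi => by
    rw [mem_fiber] at hi ⊢
    rw [h i hi, hi]
  have hcard := hw' a
  rw [if_neg hab, if_pos rfl] at hcard
  have := Finset.card_le_card hsub
  rw [hw a] at this
  lia

variable [DecidableEq ι]

theorem fiber_update_self (w : ι → L) (j : ι) (a : L) :
    fiber (Function.update w j a) a = insert j (fiber w a) := by
  ext i
  rcases eq_or_ne i j with rfl | h <;> simp [*]

theorem fiber_update_of_ne {x a : L} (hx : x ≠ a) (w : ι → L) (j : ι) :
    fiber (Function.update w j a) x = (fiber w x).erase j := by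
  ext i
  rcases eq_or_ne i j with rfl | h <;> simp [*, hx.symm]

theorem HasRootWeight.update {t : ℕ} {w : ι → L} {a a' b : L} (h : HasRootWeight t a b w) {j : ι}
    (hj : w j = a) (ha : a ≠ a') : HasRootWeight t a' b (Function.update w j a') := by
  intro x
  have hx := h x
  rcases eq_or_ne x a' with rfl | hxa'
  · rw [fiber_update_self, Finset.card_insert_of_notMem (by simpa [hj] using ha)]
    rw [if_neg ha.symm] at hx
    rw [if_pos rfl]
    lia
  · rw [fiber_update_of_ne hxa', if_neg hxa']
    rcases eq_or_ne x a with rfl | hxa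
    · have hm : j ∈ fiber w x := mem_fiber.2 hj
      have := Finset.card_pos.2 ⟨j, hm⟩
      rw [Finset.card_erase_of_mem hm]
      rw [if_pos rfl] at hx
      lia
    · rw [Finset.erase_eq_of_notMem (by simpa [hj] using hxa.symm)]
      rwa [if_neg hxa] at hx

theorem hammingDist_update_lt {w w' : ι → L} {i : ι} (hi : w i ≠ w' i) :
    hammingDist w (Function.update w' i (w i)) < hammingDist w w' := by
  refine Finset.card_lt_card (Finset.ssubset_iff_of_subset ?_ |>.2 ⟨i, by simpa using hi, by simp⟩)
  intro j
  rcases eq_or_ne j i with rfl | hj <;> simp [*]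

theorem hammingDist_update_update_lt {w w' : ι → L} {i j : ι} (hi : w i ≠ w' i) (hj : w j ≠ w i)
    (hj' : Function.update w' i (w i) j = w i) :
    hammingDist w (Function.update (Function.update w' i (w i)) j (w' i)) < hammingDist w w' := by
  refine lt_of_le_of_lt (Finset.card_le_card ?_) (hammingDist_update_lt hi)
  intro l
  rcases eq_or_ne l j with rfl | hlj <;> simp_all

end Words

section Orbital

variable {k ι L : Type*} [Fintype ι] [DecidableEq ι] [DecidableEq L]

/-- The matrix summing up the simultaneous permutations of the pair of words `(w, w')`. These span
the matrices commuting with the action of `Equiv.Perm ι` on words. -/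
def orbitalMatrix (k : Type*) [Semiring k] (w w' : ι → L) : Matrix (ι → L) (ι → L) k :=
  ∑ σ : Equiv.Perm ι, Matrix.single (w ∘ σ) (w' ∘ σ) 1

/-- The matrix, in the basis of words, of the operator sending `v` to the sum of all words obtained
from `v` by changing one letter `a` into `a'`: the action of an elementary matrix of `𝔤𝔩(L)` on a
tensor power of the natural representation. -/
def recolorMatrix (k ι : Type*) [Fintype ι] [DecidableEq ι] [Semiring k] (a a' : L) :
    Matrix (ι → L) (ι → L) k :=
  Matrix.of fun u v => ∑ j ∈ fiber v a, if Function.update v j a' = u then 1 else 0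

section Semiring

variable [Semiring k]

theorem orbitalMatrix_comp (w w' : ι → L) (τ : Equiv.Perm ι) :
    orbitalMatrix k (w ∘ τ) (w' ∘ τ) = orbitalMatrix k w w' :=
  Fintype.sum_equiv (Equiv.mulLeft τ) _ _ fun _ => rfl

theorem orbitalMatrix_apply_comp (w w' u v : ι → L) (τ : Equiv.Perm ι) :
    orbitalMatrix k w w' (u ∘ τ) (v ∘ τ) = orbitalMatrix k w w' u v := by
  simp only [orbitalMatrix, Matrix.sum_apply, Matrix.single_apply]
  refine (Fintype.sum_equiv (Equiv.mulRight τ) _ _ fun σ => ?_).symm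
  simp only [Equiv.coe_mulRight, Equiv.Perm.coe_mul, ← Function.comp_assoc,
    τ.surjective.injective_comp_right.eq_iff]

theorem orbitalMatrix_update_update {w w' : ι → L} {i j : ι} (hw : w j = w i)
    (hj : Function.update w' i (w i) j = w i) :
    orbitalMatrix k w (Function.update (Function.update w' i (w i)) j (w' i)) =
      orbitalMatrix k w w' := by
  rw [← orbitalMatrix_comp w w' (Equiv.swap i j)]
  congr 1 <;> ext l <;> simp only [Function.comp_apply, Equiv.swap_apply_def, Function.update_apply]
    <;> grind

variable [Fintype L]

theorem mul_orbitalMatrix_apply (Z : Matrix (ι → L) (ι → L) k) (w w' u v : ι → L) :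
    (Z * orbitalMatrix k w w') u v =
      ∑ σ : Equiv.Perm ι, if w' ∘ σ = v then Z u (w ∘ σ) else 0 :=
  mul_sum_single_apply ..

theorem orbitalMatrix_mul_apply (Z : Matrix (ι → L) (ι → L) k) (w w' u v : ι → L) :
    (orbitalMatrix k w w' * Z) u v =
      ∑ σ : Equiv.Perm ι, if w ∘ σ = u then Z (w' ∘ σ) v else 0 :=
  sum_single_mul_apply ..

theorem mul_recolorMatrix_apply (Z : Matrix (ι → L) (ι → L) k) (a a' : L) (u v : ι → L) :
    (Z * recolorMatrix k ι a a') u v = ∑ j ∈ fiber v a, Z u (Function.update v j a') := by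
  simp only [Matrix.mul_apply, recolorMatrix, Matrix.of_apply, Finset.mul_sum]
  rw [Finset.sum_comm]
  simp

theorem recolorMatrix_mul_apply (Z : Matrix (ι → L) (ι → L) k) (a a' : L) (u v : ι → L) :
    (recolorMatrix k ι a a' * Z) u v = ∑ j ∈ fiber u a', Z (Function.update u j a) v := by
  simp only [Matrix.mul_apply, recolorMatrix, Matrix.of_apply, fiber, Finset.sum_filter,
    Finset.sum_mul, ← ite_and, update_eq_iff_update_eq, ite_mul, one_mul, zero_mul]
  rw [Finset.sum_comm]
  simp [ite_and]

theorem orbitalMatrix_mul_recolorMatrix (a a' : L) (w w' : ι → L) :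
    orbitalMatrix k w w' * recolorMatrix k ι a' a =
      ∑ j ∈ fiber w' a, orbitalMatrix k w (Function.update w' j a') := by
  ext u v
  have hrow (σ : Equiv.Perm ι) : recolorMatrix k ι a' a (w' ∘ σ) v =
      ∑ j ∈ fiber w' a, if Function.update w' j a' ∘ σ = v then 1 else 0 := by
    rw [← mul_one (recolorMatrix k ι a' a), recolorMatrix_mul_apply, fiber_comp, Finset.sum_map]
    simp [← update_comp_perm, Matrix.one_apply]
  simp only [orbitalMatrix_mul_apply, hrow, Matrix.sum_apply]
  simp only [orbitalMatrix, Matrix.sum_apply, Matrix.single_apply, ite_and]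
  rw [Finset.sum_comm]
  refine Finset.sum_congr rfl fun σ _ => ?_
  split_ifs <;> simp

/-- The matrix `Z` commutes with the action of `𝔤𝔩(L)` wherever this action connects two words whose
weights differ from the balanced weight by at most one root. -/
def CommutesWithRecoloring (t : ℕ) (Z : Matrix (ι → L) (ι → L) k) : Prop :=
  ∀ a a' b : L, a ≠ a' → ∀ u v : ι → L, HasRootWeight t a' b u → HasRootWeight t a b v →
    (Z * recolorMatrix k ι a a') u v = (recolorMatrix k ι a a' * Z) u v

end Semiring

variable [Field k] [Fintype L] {t : ℕ} {Z : Matrix (ι → L) (ι → L) k}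

theorem mul_orbitalMatrix_self_apply_comm {u v : ι → L} (hu : IsBalanced t u) (hv : IsBalanced t v)
    (w : ι → L) : (Z * orbitalMatrix k w w) u v = (orbitalMatrix k w w * Z) u v := by
  have hdiag : orbitalMatrix k w w = Matrix.diagonal fun x => orbitalMatrix k w w x x := by
    ext x y
    rcases eq_or_ne x y with rfl | hxy
    · simp
    · rw [Matrix.diagonal_apply_ne _ hxy, orbitalMatrix, Matrix.sum_apply]
      refine Finset.sum_eq_zero fun σ _ => Matrix.single_apply_of_ne _ _ _ _ _ ?_
      rintro ⟨rfl, rfl⟩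
      exact hxy rfl
  obtain ⟨τ, rfl⟩ := exists_comp_eq_of_card_fiber_eq fun x => (hu x).trans (hv x).symm
  rw [hdiag, Matrix.mul_diagonal, Matrix.diagonal_mul, orbitalMatrix_apply_comp, mul_comm]

theorem sum_mul_orbitalMatrix_update_apply (hZ : CommutesWithRecoloring t Z) {a a' b : L}
    (ha : a ≠ a') {w w' u v : ι → L} (hw' : HasRootWeight t a' b w') (hv : HasRootWeight t a b v)
    (h : ∀ x, HasRootWeight t a' b x →
      (Z * orbitalMatrix k w w') u x = (orbitalMatrix k w w' * Z) u x) :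
    ∑ j ∈ fiber w' a', (Z * orbitalMatrix k w (Function.update w' j a)) u v =
      ∑ j ∈ fiber w' a', (orbitalMatrix k w (Function.update w' j a) * Z) u v := by
  set T := orbitalMatrix k w w'
  set R := recolorMatrix k ι a a'
  suffices (Z * (T * R)) u v = ((T * R) * Z) u v by
    simpa only [T, R, orbitalMatrix_mul_recolorMatrix, Matrix.mul_sum, Matrix.sum_mul,
      Matrix.sum_apply] using this
  calc (Z * (T * R)) u v = ((Z * T) * R) u v := by rw [mul_assoc]
    _ = ((T * Z) * R) u v := by
      rw [mul_recolorMatrix_apply, mul_recolorMatrix_apply]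
      exact Finset.sum_congr rfl fun j hj => h _ (hv.update (mem_fiber.1 hj) ha)
    _ = (T * (Z * R)) u v := by rw [mul_assoc]
    _ = (T * (R * Z)) u v := by
      rw [orbitalMatrix_mul_apply, orbitalMatrix_mul_apply]
      refine Finset.sum_congr rfl fun σ _ => ?_
      rw [hZ a a' b ha _ _ (hw'.comp σ) hv]
    _ = ((T * R) * Z) u v := by rw [mul_assoc]

/- Induction on the Hamming distance of `w` and `w'`: replacing the letter `w' i` by `w i` brings
`w'` closer to `w`, and changing the letter back in all possible ways recovers `w'`, up to a common
permutation of `w` and `w'`, together with words which are still closer to `w` than `w'` is. -/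
theorem mul_orbitalMatrix_apply_comm [CharZero k] (hZ : CommutesWithRecoloring t Z) {w w' : ι → L}
    {a b : L} (hw : IsBalanced t w) (hw' : HasRootWeight t a b w') {u v : ι → L}
    (hu : IsBalanced t u) (hv : HasRootWeight t a b v) :
    (Z * orbitalMatrix k w w') u v = (orbitalMatrix k w w' * Z) u v := by
  induction hd : hammingDist w w' using Nat.strong_induction_on generalizing a b w' v with
  | _ d ih =>
    subst hd
    wlog h : ∃ i, w' i = a ∧ w i ≠ w' i generalizing a b
    · obtain rfl : a = b := by_contra fun hab => h (exists_ne_of_hasRootWeight hw hw' hab)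
      rw [hasRootWeight_self] at hw' hv
      by_cases hww : w = w'
      · subst hww
        exact mul_orbitalMatrix_self_apply_comm hu hv w
      · obtain ⟨i, hi⟩ := Function.ne_iff.1 hww
        exact this (hasRootWeight_self.2 hw') (hasRootWeight_self.2 hv) ⟨i, rfl, hi⟩
    obtain ⟨i, rfl, hi⟩ := h
    set w₂ := Function.update w' i (w i) with hw₂_def
    have hw₂ : HasRootWeight t (w i) b w₂ := hw'.update rfl hi.symm
    have hsum := sum_mul_orbitalMatrix_update_apply hZ hi.symm hw₂ hv fun x hx =>
      ih _ (hammingDist_update_lt hi) hw₂ hx rfl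
    rw [← sub_eq_zero, ← Finset.sum_sub_distrib,
      ← Finset.sum_filter_add_sum_filter_not _ (fun j => w j = w i),
      Finset.sum_congr rfl (g := fun _ => (Z * orbitalMatrix k w w') u v -
        (orbitalMatrix k w w' * Z) u v), Finset.sum_const,
      Finset.sum_eq_zero (s := {j ∈ _ | ¬ _}), add_zero, nsmul_eq_mul, mul_eq_zero,
      Nat.cast_eq_zero, sub_eq_zero] at hsum
    · refine hsum.resolve_left (Finset.card_ne_zero_of_mem (a := i) ?_)
      simp [hw₂_def]
    · intro j hj
      rw [Finset.mem_filter, mem_fiber] at hj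
      rw [sub_eq_zero]
      exact ih _ (hammingDist_update_update_lt hi hj.2 hj.1) (hw₂.update hj.1 hi) hv rfl
    · intro j hj
      rw [Finset.mem_filter, mem_fiber] at hj
      rw [orbitalMatrix_update_update hj.2 hj.1]

end Orbital

section BalancedBlock

variable {k ι L : Type*} [Fintype ι] [DecidableEq L]

/-- The balanced words, with `Equiv.Perm ι` permuting the positions. -/
def balancedWords (ι L : Type*) [Fintype ι] [DecidableEq L] (t : ℕ) :
    SubMulAction (Equiv.Perm ι)ᵈᵐᵃ (ι → L) where
  carrier := {w | IsBalanced t w}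
  smul_mem' σ _ hw := hw.comp (DomMulAct.mk.symm σ)

theorem exists_coeff_of_commutesWithRecoloring [Field k] [CharZero k] [DecidableEq ι] [Fintype L]
    [Nonempty L] {t : ℕ} {Z : Matrix (ι → L) (ι → L) k} (hZ : CommutesWithRecoloring t Z) :
    ∃ a : Equiv.Perm ι → k, ∀ u v, IsBalanced t u → IsBalanced t v →
      Z u v = ∑ σ : Equiv.Perm ι, if u ∘ σ = v then a σ else 0 := by
  classical
  let G := (Equiv.Perm ι)ᵈᵐᵃ
  let : Fintype G := Fintype.ofEquiv _ DomMulAct.mk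
  have : NeZero (Nat.card G : k) := ⟨by simp⟩
  let Z' : Matrix (balancedWords ι L t) (balancedWords ι L t) k := Matrix.of fun u v => Z u v
  have hsmul (g : G) (w v : balancedWords ι L t) : g • w = v ↔
      (w : ι → L) ∘ (DomMulAct.mk.symm g : Equiv.Perm ι) = v := Subtype.ext_iff
  obtain ⟨a, ha⟩ := exists_eq_sum_of_commute_sum_single (G := G) Z' fun w w' => by
    ext u v
    let b := Classical.arbitrary L
    have key := mul_orbitalMatrix_apply_comm hZ w.2 ((hasRootWeight_self (a := b)).2 w'.2) u.2
      (hasRootWeight_self.2 v.2)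
    rw [mul_orbitalMatrix_apply, orbitalMatrix_mul_apply] at key
    rw [mul_sum_single_apply, sum_single_mul_apply]
    simp only [hsmul]
    exact (Equiv.sum_comp DomMulAct.mk.symm _).trans
      (key.trans (Equiv.sum_comp DomMulAct.mk.symm _).symm)
  refine ⟨fun σ => a (DomMulAct.mk σ⁻¹), fun u v hu hv => (ha ⟨u, hu⟩ ⟨v, hv⟩).trans
    (Fintype.sum_equiv (DomMulAct.mk.symm.trans (Equiv.inv _)) _ _ fun g => ?_)⟩
  have : (⟨u, hu⟩ : balancedWords ι L t) = g • ⟨v, hv⟩ ↔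
      u ∘ (DomMulAct.mk.symm g : Equiv.Perm ι).symm = v := by
    rw [eq_comm, hsmul, eq_comm, Equiv.comp_symm_eq]
  simp [this]

end BalancedBlock

/-! ### Inverting the lowering operator of `𝔰𝔩₂` -/

section Lowering

/-- The coefficients `(-1) ^ e / ((t + 1) * t.choose e)`, which invert the lowering operator of
`𝔰𝔩₂` on the weight space just above weight zero. -/
def loweringCoeff (k : Type*) [Field k] (t e : ℕ) : k := (-1) ^ e / ((t + 1) * t.choose e)

variable {k : Type*} [Field k] [CharZero k] {t : ℕ}

theorem loweringCoeff_zero : (t + 1) * loweringCoeff k t 0 = 1 := by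
  have : (t + 1 : k) ≠ 0 := by exact_mod_cast t.succ_ne_zero
  simp [loweringCoeff, this]

theorem loweringCoeff_succ {e : ℕ} (he : e < t) :
    (e + 1) * loweringCoeff k t e + (t - e) * loweringCoeff k t (e + 1) = 0 := by
  have ht : (t + 1 : k) ≠ 0 := by exact_mod_cast t.succ_ne_zero
  have h₀ : (t.choose e : k) ≠ 0 := by exact_mod_cast (Nat.choose_pos he.le).ne'
  have h₁ : (t.choose (e + 1) : k) ≠ 0 := by exact_mod_cast (Nat.choose_pos he).ne'
  have hrec : (t.choose (e + 1) : k) * (e + 1) = t.choose e * (t - e) := by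
    rw [← Nat.cast_sub he.le]
    exact_mod_cast Nat.choose_succ_right_eq t e
  simp only [loweringCoeff]
  field_simp
  linear_combination (-1) ^ e * hrec

theorem sum_loweringCoeff_card_erase_inter {ι : Type*} [DecidableEq ι] {S B : Finset ι}
    (hS : S.card = t + 1) (hSB : (S ∩ B).card ≤ t) :
    ∑ j ∈ S, loweringCoeff k t (S.erase j ∩ B).card = if Disjoint S B then 1 else 0 := by
  set e := (S ∩ B).card
  have hsplit : ∑ j ∈ S, loweringCoeff k t (S.erase j ∩ B).card =
      e * loweringCoeff k t (e - 1) + (t + 1 - e) * loweringCoeff k t e := by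
    have hdiff : ((S \ B).card : k) = t + 1 - e := by
      rw [eq_sub_iff_add_eq]
      exact_mod_cast (Finset.card_sdiff_add_card_inter S B).trans hS
    rw [← Finset.sum_inter_add_sum_sdiff S B,
      Finset.sum_congr rfl (g := fun _ => loweringCoeff k t (e - 1)), Finset.sum_const,
      Finset.sum_congr (s₁ := S \ B) rfl (g := fun _ => loweringCoeff k t e), Finset.sum_const,
      nsmul_eq_mul, nsmul_eq_mul, hdiff]
    · intro j hj
      rw [Finset.erase_inter, Finset.erase_eq_of_notMem]
      exact fun h => (Finset.mem_sdiff.1 hj).2 (Finset.mem_inter.1 h).2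
    · intro j hj
      rw [Finset.erase_inter, Finset.card_erase_of_mem hj]
  rw [hsplit]
  split_ifs with hd
  · have he : e = 0 := by rwa [Finset.card_eq_zero, ← Finset.disjoint_iff_inter_eq_empty]
    simp [he, loweringCoeff_zero]
  · obtain ⟨d, hd⟩ : ∃ d, e = d + 1 := Nat.exists_eq_succ_of_ne_zero <| by
      rwa [Ne, Finset.card_eq_zero, ← Finset.disjoint_iff_inter_eq_empty]
    rw [hd, Nat.add_sub_cancel, ← loweringCoeff_succ (k := k) (t := t) (e := d) (by lia)]
    push_cast
    ring

variable {ι L : Type*} [Fintype ι] [DecidableEq L] {a b : L}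

theorem eq_of_disjoint_fiber {x w : ι → L} (hcard : (fiber x a).card = (fiber w a).card)
    (hoff : ∀ c, c ≠ a → c ≠ b → fiber x c = fiber w c)
    (hd : Disjoint (fiber x a) (fiber w b)) : x = w := by
  have hsub : fiber x a ⊆ fiber w a := fun i hi => by
    by_contra hwa
    rw [mem_fiber] at hwa
    have hwb : w i ≠ b := fun h => Finset.disjoint_left.1 hd hi (mem_fiber.2 h)
    have hxi : i ∈ fiber x (w i) := hoff _ hwa hwb ▸ mem_fiber.2 rfl
    exact hwa ((mem_fiber.1 hxi).symm.trans (mem_fiber.1 hi))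
  have ha : fiber x a = fiber w a := Finset.eq_of_subset_of_card_le hsub hcard.ge
  have hoff' (c : L) (hc : c ≠ b) : fiber x c = fiber w c := by
    rcases eq_or_ne c a with rfl | hca
    exacts [ha, hoff c hca hc]
  funext i
  by_cases hxb : x i = b
  · by_cases hwb : w i = b
    · rw [hxb, hwb]
    · exact mem_fiber.1 (hoff' _ hwb ▸ mem_fiber.2 rfl)
  · exact (mem_fiber.1 (hoff' _ hxb ▸ mem_fiber.2 rfl)).symm

variable [DecidableEq ι]

theorem fiber_update_of_ne_of_ne {x : ι → L} {j : ι} (hj : x j = a) {c : L} (hca : c ≠ a)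
    (hcb : c ≠ b) : fiber (Function.update x j b) c = fiber x c := by
  rw [fiber_update_of_ne hcb, Finset.erase_eq_of_notMem]
  rw [mem_fiber, hj]
  exact hca.symm

theorem isBalanced_update_iff {x : ι → L} {j : ι} (hj : x j = a) (hab : a ≠ b) :
    IsBalanced t (Function.update x j b) ↔ HasRootWeight t a b x := by
  rw [← hasRootWeight_self (a := b)]
  refine ⟨fun h => ?_, fun h => h.update hj hab⟩
  have := h.update (j := j) (Function.update_self ..) hab.symm
  rwa [Function.update_idem, ← hj, Function.update_eq_self, hj] at this

theorem exists_sum_update_eq_ite (hab : a ≠ b) {w : ι → L} (hw : HasRootWeight t a b w) :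
    ∃ c : (ι → L) → k,
      (∀ u, c u ≠ 0 → IsBalanced t u ∧ ∀ x, x ≠ a → x ≠ b → fiber u x = fiber w x) ∧
      ∀ x, ∑ j ∈ fiber x a, c (Function.update x j b) = if x = w then 1 else 0 := by
  classical
  let Good (u : ι → L) : Prop := ∀ x, x ≠ a → x ≠ b → fiber u x = fiber w x
  refine ⟨fun u => if IsBalanced t u ∧ Good u then
    loweringCoeff k t (fiber u a ∩ fiber w b).card else 0, fun u hu => ?_, fun x => ?_⟩
  · by_contra h
    exact hu (if_neg h)
  have hcond : ∀ j ∈ fiber x a, IsBalanced t (Function.update x j b) ∧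
      Good (Function.update x j b) ↔ HasRootWeight t a b x ∧ Good x := fun j hj => by
    rw [mem_fiber] at hj
    refine and_congr (isBalanced_update_iff hj hab) (forall₃_congr fun c hca hcb => ?_)
    rw [fiber_update_of_ne_of_ne hj hca hcb]
  rw [Finset.sum_congr rfl (g := fun j => if HasRootWeight t a b x ∧ Good x then
    loweringCoeff k t ((fiber x a).erase j ∩ fiber w b).card else 0)
    fun j hj => by simp only [hcond j hj, fiber_update_of_ne hab]]
  have hwa : (fiber w a).card = t + 1 := by simpa [hab] using hw a
  by_cases hx : HasRootWeight t a b x ∧ Good x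
  · have hxa : (fiber x a).card = t + 1 := by simpa [hab] using hx.1 a
    have hwb : (fiber w b).card ≤ t := by
      have := hw b
      rw [if_pos rfl, if_neg hab.symm] at this
      lia
    simp only [if_pos hx]
    rw [sum_loweringCoeff_card_erase_inter hxa
      ((Finset.card_le_card Finset.inter_subset_right).trans hwb)]
    refine if_congr ⟨eq_of_disjoint_fiber (hxa.trans hwa.symm) hx.2, ?_⟩ rfl rfl
    rintro rfl
    exact Finset.disjoint_left.2 fun i hi hi' =>
      hab ((mem_fiber.1 hi).symm.trans (mem_fiber.1 hi'))
  · simp only [if_neg hx, Finset.sum_const_zero]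
    rw [if_neg]
    rintro rfl
    exact hx ⟨hw, fun _ _ _ => rfl⟩

end Lowering

/-! ### Products of minors indexed by words -/

section UpdateSums

variable {ι L A : Type*} [Fintype ι] [DecidableEq ι] [DecidableEq L] [AddCommMonoid A]

theorem sum_fiber_ite_eq_update (u w : ι → L) (a a' : L) (x : A) :
    ∑ j ∈ fiber w a, (if u = Function.update w j a' then x else 0) =
      ∑ j ∈ fiber u a', if Function.update u j a = w then x else 0 := by
  simp only [fiber, Finset.sum_filter, ← ite_and]
  refine Finset.sum_congr rfl fun j _ => if_congr ?_ rfl rfl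
  rw [← update_eq_iff_update_eq, eq_comm (a := u)]

theorem sum_sum_fiber_update [Fintype L] (f : (ι → L) → (ι → L) → A) (a b : L) :
    ∑ u, ∑ j ∈ fiber u b, f u (Function.update u j a) =
      ∑ x, ∑ j ∈ fiber x a, f (Function.update x j b) x := by
  rw [Finset.sum_sigma', Finset.sum_sigma']
  refine Finset.sum_bij' (fun p _ => ⟨Function.update p.1 p.2 a, p.2⟩)
    (fun p _ => ⟨Function.update p.1 p.2 b, p.2⟩) ?_ ?_ ?_ ?_ ?_ <;>
  · rintro ⟨u, j⟩ hj
    obtain rfl : u j = _ := by simpa using hj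
    simp

end UpdateSums

section BlockMinor

variable {k ι L P Q : Type*} [CommRing k] [Fintype ι] [DecidableEq ι] [DecidableEq L]

/-- The determinant of the generic matrix with rows `r` and columns `c` after all entries in those
positions `(i, j)` for which the row label `w i` differs from the column label `w' j` have been
replaced by zero. Up to sign it is the product of the minors of the blocks on which both labels are
constant. -/
noncomputable def blockMinor (k : Type*) [CommRing k] (r : ι → P) (c : ι → Q) (w w' : ι → L) :
    MvPolynomial (P × Q) k :=
  Matrix.det (Matrix.of fun i j => if w i = w' j then X (r i, c j) else 0)

variable (r : ι → P) (c : ι → Q)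

theorem blockMinor_eq_sum (w w' : ι → L) : blockMinor k r c w w' =
    ∑ σ : Equiv.Perm ι, if w ∘ σ = w' then Equiv.Perm.sign σ • ∏ i, X (r (σ i), c i) else 0 := by
  simp only [blockMinor, Matrix.det_apply, Matrix.of_apply, Finset.prod_ite_zero, Finset.mem_univ,
    true_imp_iff, funext_iff, Function.comp_apply, smul_ite, smul_zero]

theorem blockMinor_comp (w w' : ι → L) (σ τ : Equiv.Perm ι) :
    blockMinor k (r ∘ σ) (c ∘ τ) (w ∘ σ) (w' ∘ τ) =
      Equiv.Perm.sign σ • Equiv.Perm.sign τ • blockMinor k r c w w' := by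
  let M : Matrix ι ι (MvPolynomial (P × Q) k) :=
    Matrix.of fun i j => if w i = w' j then X (r i, c j) else 0
  have : ((M.submatrix σ id).submatrix id τ).det =
      Equiv.Perm.sign σ • Equiv.Perm.sign τ • M.det := by
    rw [Matrix.det_permute', Matrix.det_permute, smul_comm]
    simp only [Units.smul_def, zsmul_eq_mul]
  exact this

theorem sum_blockMinor_update (v w : ι → L) (a a' : L) :
    ∑ j ∈ fiber w a, blockMinor k r c v (Function.update w j a') =
      ∑ j ∈ fiber v a', blockMinor k r c (Function.update v j a) w := by
  simp only [blockMinor_eq_sum]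
  rw [Finset.sum_comm, Finset.sum_comm (s := fiber v a')]
  refine Finset.sum_congr rfl fun σ _ => ?_
  rw [sum_fiber_ite_eq_update, fiber_comp, Finset.sum_map]
  simp [← update_comp_perm]

theorem sum_smul_sum_blockMinor_update [Fintype L] (w w' : ι → L) {a b : L} {e : (ι → L) → k}
    (he : ∀ x, ∑ j ∈ fiber x a, e (Function.update x j b) = if x = w then 1 else 0) :
    ∑ u, e u • ∑ j ∈ fiber w' a, blockMinor k r c u (Function.update w' j b) =
      blockMinor k r c w w' := by
  simp only [sum_blockMinor_update, Finset.smul_sum]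
  rw [sum_sum_fiber_update fun u x => e u • blockMinor k r c x w']
  simp only [← Finset.sum_smul, he]
  simp

end BlockMinor

section AlternatingVar

variable {k : Type*} [CommRing k] {t m n : ℕ}

/-- The pair of the sets of values of two injective sequences of rows and columns. -/
def imageIndex (r : Fin t → Fin m) (c : Fin t → Fin n)
    (h : Function.Injective r ∧ Function.Injective c) : MinorIndex t m n :=
  ⟨(Finset.univ.image r, Finset.univ.image c), by simp [Finset.card_image_of_injective _ h.1],
    by simp [Finset.card_image_of_injective _ h.2]⟩

theorem imageIndex_comp {r : Fin t → Fin m} {c : Fin t → Fin n} {σ τ : Equiv.Perm (Fin t)}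
    (h : Function.Injective (r ∘ σ) ∧ Function.Injective (c ∘ τ)) :
    imageIndex (r ∘ σ) (c ∘ τ) h =
      imageIndex r c ⟨σ.injective_comp r |>.1 h.1, τ.injective_comp c |>.1 h.2⟩ :=
  Subtype.ext <| Prod.ext (by simp [imageIndex, ← Finset.image_image])
    (by simp [imageIndex, ← Finset.image_image])

/-- The indeterminate `y_{I,J}` indexed by sequences instead of sets of rows and columns: the
preimage of the minor with rows `r 0, …, r (t - 1)` and columns `c 0, …, c (t - 1)`. It is `y_{I,J}`
up to the sign which sorts `r` and `c`, and `0` if a row or column is repeated. -/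
noncomputable def alternatingVar (k : Type*) [CommRing k] (r : Fin t → Fin m) (c : Fin t → Fin n) :
    MvPolynomial (MinorIndex t m n) k :=
  open Classical in
  if h : Function.Injective r ∧ Function.Injective c then
    Equiv.Perm.sign (Tuple.sort r) • Equiv.Perm.sign (Tuple.sort c) • X (imageIndex r c h)
  else 0

theorem minorPresentation_X (p : MinorIndex t m n) :
    minorPresentation k t m n (X p) = genericMinor k m n t p.1.1 p.1.2 p.2.1 p.2.2 :=
  aeval_X _ _

theorem orderIsoOfFin_image {r : Fin t → Fin m} (hr : Function.Injective r)
    (hcard : (Finset.univ.image r).card = t) (j : Fin t) :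
    ((Finset.univ.image r).orderIsoOfFin hcard j : Fin m) = r (Tuple.sort r j) :=
  (congrFun (Finset.orderEmbOfFin_unique hcard (f := r ∘ Tuple.sort r) (by simp)
    ((Tuple.monotone_sort r).strictMono_of_injective
      (hr.comp (Tuple.sort r).injective))) j).symm

theorem sort_comp {r : Fin t → Fin m} (hr : Function.Injective r) (σ : Equiv.Perm (Fin t)) :
    Tuple.sort (r ∘ σ) = σ⁻¹ * Tuple.sort r := by
  ext1 j
  rw [Equiv.Perm.mul_apply, Equiv.Perm.eq_inv_iff_eq]
  exact hr (congrFun Tuple.comp_perm_comp_sort_eq_comp_sort j)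

theorem minorPresentation_alternatingVar (r : Fin t → Fin m) (c : Fin t → Fin n) :
    minorPresentation k t m n (alternatingVar k r c) =
      (Matrix.of fun i j => (X (r i, c j) : MvPolynomial (Fin m × Fin n) k)).det := by
  set M : Matrix (Fin t) (Fin t) (MvPolynomial (Fin m × Fin n) k) :=
    Matrix.of fun i j => X (r i, c j)
  by_cases h : Function.Injective r ∧ Function.Injective c
  · have hX : minorPresentation k t m n (X (imageIndex r c h)) =
        ((M.submatrix (Tuple.sort r) id).submatrix id (Tuple.sort c)).det := by
      rw [minorPresentation_X, genericMinor]
      congr 1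
      ext1 i j
      exact congrArg X <| Prod.ext (orderIsoOfFin_image h.1 (imageIndex r c h).2.1 i)
        (orderIsoOfFin_image h.2 (imageIndex r c h).2.2 j)
    rw [alternatingVar, dif_pos h, ← AlgHom.toLinearMap_apply]
    simp only [LinearMap.map_smul_of_tower]
    rw [AlgHom.toLinearMap_apply, hX, Matrix.det_permute',
      Matrix.det_permute, ← zsmul_eq_mul, ← zsmul_eq_mul, ← Units.smul_def, ← Units.smul_def,
      smul_smul (Equiv.Perm.sign (Tuple.sort c)), Int.units_mul_self, one_smul, smul_smul,
      Int.units_mul_self, one_smul]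
  · rw [alternatingVar, dif_neg h, map_zero]
    rw [not_and_or, Function.not_injective_iff, Function.not_injective_iff] at h
    obtain ⟨i, j, hij, hne⟩ | ⟨i, j, hij, hne⟩ := h
    · exact (Matrix.det_zero_of_row_eq hne (by ext; simp [M, hij])).symm
    · exact (Matrix.det_zero_of_column_eq hne (by simp [M, hij])).symm

theorem alternatingVar_comp (r : Fin t → Fin m) (c : Fin t → Fin n) (σ τ : Equiv.Perm (Fin t)) :
    alternatingVar k (r ∘ σ) (c ∘ τ) =
      Equiv.Perm.sign σ • Equiv.Perm.sign τ • alternatingVar k r c := by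
  by_cases h : Function.Injective r ∧ Function.Injective c
  · have h' : Function.Injective (r ∘ σ) ∧ Function.Injective (c ∘ τ) :=
      ⟨h.1.comp σ.injective, h.2.comp τ.injective⟩
    rw [alternatingVar, alternatingVar, dif_pos h, dif_pos h', imageIndex_comp, sort_comp h.1,
      sort_comp h.2, map_mul, map_mul, Equiv.Perm.sign_inv, Equiv.Perm.sign_inv, mul_smul, mul_smul,
      smul_comm (Equiv.Perm.sign (Tuple.sort r))]
  · have h' : ¬ (Function.Injective (r ∘ σ) ∧ Function.Injective (c ∘ τ)) := by
      rwa [σ.injective_comp, τ.injective_comp]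
    rw [alternatingVar, alternatingVar, dif_neg h, dif_neg h', smul_zero, smul_zero]

theorem isHomogeneous_alternatingVar (r : Fin t → Fin m) (c : Fin t → Fin n) :
    (alternatingVar k r c).IsHomogeneous 1 := by
  rw [← mem_homogeneousSubmodule, alternatingVar]
  split_ifs
  · exact Submodule.smul_of_tower_mem _ _ (Submodule.smul_of_tower_mem _ _ (isHomogeneous_X k _))
  · exact zero_mem _

theorem alternatingVar_eq_zero_of_minorPresentation_eq_zero [Nontrivial k] {r : Fin t → Fin m}
    {c : Fin t → Fin n}
    (h : minorPresentation k t m n (alternatingVar k r c) = 0) : alternatingVar k r c = 0 := by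
  by_cases hrc : Function.Injective r ∧ Function.Injective c
  · have hdet : (Matrix.of fun i j => (X (r i, c j) : MvPolynomial (Fin m × Fin n) k)).det =
        rename (Prod.map r c) (Matrix.mvPolynomialX (Fin t) (Fin t) k).det := by
      rw [AlgHom.map_det]
      congr 1
      ext1 i j
      simp
    rw [minorPresentation_alternatingVar, hdet,
      map_eq_zero_iff _ (rename_injective _ (hrc.1.prodMap hrc.2))] at h
    exact absurd h (Matrix.det_mvPolynomialX_ne_zero _ _)
  · rw [alternatingVar, dif_neg hrc]

theorem exists_alternatingVar_eq_X (p : MinorIndex t m n) : ∃ r c, alternatingVar k r c = X p := by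
  obtain ⟨⟨I, J⟩, hI, hJ⟩ := p
  refine ⟨I.orderEmbOfFin hI, J.orderEmbOfFin hJ, ?_⟩
  rw [alternatingVar, dif_pos ⟨(I.orderEmbOfFin hI).injective, (J.orderEmbOfFin hJ).injective⟩,
    Tuple.sort_eq_refl_iff_monotone.2 (I.orderEmbOfFin hI).monotone,
    Tuple.sort_eq_refl_iff_monotone.2 (J.orderEmbOfFin hJ).monotone]
  simp [imageIndex]

end AlternatingVar

section VarProd

theorem exists_eq_prodCongrLeft {α β : Type*} [Finite α] {η : Equiv.Perm (α × β)}
    (h : Prod.snd ∘ η = Prod.snd) : ∃ σ : β → Equiv.Perm α, η = Equiv.prodCongrLeft σ := by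
  have hsnd (p : α × β) : (η p).2 = p.2 := congrFun h p
  have hbij (b : β) : Function.Bijective fun a => (η (a, b)).1 := by
    rw [← Finite.injective_iff_bijective]
    intro a a' haa'
    simpa using η.injective (Prod.ext haa' ((hsnd (a, b)).trans (hsnd (a', b)).symm))
  exact ⟨fun b => Equiv.ofBijective _ (hbij b), Equiv.ext fun p => Prod.ext rfl (hsnd p)⟩

variable {k L : Type*} [CommRing k] [Fintype L] {t m n : ℕ}

/-- The product over `a : L` of the variables with rows `r (·, a)` and columns `c (·, a)`. -/
noncomputable def varProd (k : Type*) [CommRing k] (r : Fin t × L → Fin m) (c : Fin t × L → Fin n) :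
    MvPolynomial (MinorIndex t m n) k :=
  ∏ a : L, alternatingVar k (fun j => r (j, a)) (fun j => c (j, a))

theorem minorPresentation_varProd [DecidableEq L] (r : Fin t × L → Fin m) (c : Fin t × L → Fin n) :
    minorPresentation k t m n (varProd k r c) = blockMinor k r c Prod.snd Prod.snd := by
  simp only [varProd, map_prod, minorPresentation_alternatingVar]
  rw [← Matrix.det_blockDiagonal, blockMinor]
  congr 1
  ext1 ⟨i, a⟩ ⟨j, b⟩
  rcases eq_or_ne a b with rfl | h <;> simp [Matrix.blockDiagonal_apply, *]

theorem varProd_comp [DecidableEq L] (r : Fin t × L → Fin m) (c : Fin t × L → Fin n)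
    {η η' : Equiv.Perm (Fin t × L)} (h : Prod.snd ∘ η = Prod.snd) (h' : Prod.snd ∘ η' = Prod.snd) :
    varProd k (r ∘ η) (c ∘ η') = Equiv.Perm.sign η • Equiv.Perm.sign η' • varProd k r c := by
  obtain ⟨σ, rfl⟩ := exists_eq_prodCongrLeft h
  obtain ⟨σ', rfl⟩ := exists_eq_prodCongrLeft h'
  rw [Equiv.Perm.sign_prodCongrLeft, Equiv.Perm.sign_prodCongrLeft, varProd, varProd,
    ← Finset.prod_smul, ← Finset.prod_smul]
  exact Finset.prod_congr rfl fun a _ =>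
    alternatingVar_comp (fun j => r (j, a)) (fun j => c (j, a)) (σ a) (σ' a)

open scoped Pointwise in
theorem homogeneousSubmodule_le_span_varProd :
    homogeneousSubmodule (MinorIndex t m n) k (Fintype.card L) ≤
      Submodule.span k (Set.range fun rc : (Fin t × L → Fin m) × (Fin t × L → Fin n) =>
        varProd k rc.1 rc.2) := by
  rw [← homogeneousSubmodule_one_pow, homogeneousSubmodule_one_eq_span_X, Submodule.span_pow,
    Submodule.span_le, ← Finset.card_univ,
    ← Finset.prod_const (Set.range (X : MinorIndex t m n → MvPolynomial _ k))]
  rintro _ hp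
  obtain ⟨f, hf, rfl⟩ := (Set.mem_fintype_prod ..).1 hp
  choose p hp using hf
  choose r c hrc using fun a => exists_alternatingVar_eq_X (k := k) (p a)
  refine Submodule.subset_span ⟨(fun q => r q.2 q.1, fun q => c q.2 q.1), ?_⟩
  exact Finset.prod_congr rfl fun a _ => (hrc a).trans (hp a)

end VarProd

section Lift

variable {L : Type*} [DecidableEq L] [Fintype L] {t m n : ℕ}

theorem isBalanced_snd : IsBalanced t (Prod.snd : Fin t × L → L) := fun a => by
  have : fiber (Prod.snd : Fin t × L → L) a = Finset.univ ×ˢ {a} := by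
    ext p
    simp [mem_fiber, Prod.ext_iff, eq_comm]
  simp [this]

/-- A permutation `η` with `w ∘ η = Prod.snd`, listing the fibers of `w` one after the other. Its
value is arbitrary unless `w` is balanced. -/
noncomputable def sortingPerm (w : Fin t × L → L) : Equiv.Perm (Fin t × L) :=
  Classical.epsilon fun η => w ∘ η = Prod.snd

theorem IsBalanced.comp_sortingPerm {w : Fin t × L → L} (hw : IsBalanced t w) :
    w ∘ sortingPerm w = Prod.snd :=
  Classical.epsilon_spec (p := fun η : Equiv.Perm (Fin t × L) => w ∘ η = Prod.snd)
    (exists_comp_eq_of_card_fiber_eq fun x => (hw x).trans (isBalanced_snd x).symm)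

/-- The enumeration of a fiber of `w` given by a permutation sorting `w`. -/
def fiberEquiv {w : Fin t × L → L} {η : Equiv.Perm (Fin t × L)} (h : w ∘ η = Prod.snd) (a : L) :
    Fin t ≃ fiber w a where
  toFun j := ⟨η (j, a), mem_fiber.2 (congrFun h (j, a))⟩
  invFun i := (η.symm i).1
  left_inv j := by simp
  right_inv i := by
    have : (η.symm i).2 = a := by simpa [mem_fiber.1 i.2, eq_comm] using congrFun h (η.symm i)
    ext1
    simp [← this]

variable (k : Type*) [CommRing k] (r : Fin t × L → Fin m) (c : Fin t × L → Fin n)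

/-- The preimage of `blockMinor k r c w w'` which, for balanced `w` and `w'`, is up to sign the
product over `a : L` of the variables with rows `fiber w a` and columns `fiber w' a`. -/
noncomputable def blockMinorLift (w w' : Fin t × L → L) : MvPolynomial (MinorIndex t m n) k :=
  Equiv.Perm.sign (sortingPerm w) • Equiv.Perm.sign (sortingPerm w') •
    varProd k (r ∘ sortingPerm w) (c ∘ sortingPerm w')

variable {k}

theorem minorPresentation_blockMinorLift {w w' : Fin t × L → L} (hw : IsBalanced t w)
    (hw' : IsBalanced t w') :
    minorPresentation k t m n (blockMinorLift k r c w w') = blockMinor k r c w w' := by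
  rw [blockMinorLift, ← AlgHom.toLinearMap_apply]
  simp only [LinearMap.map_smul_of_tower]
  rw [AlgHom.toLinearMap_apply, minorPresentation_varProd]
  nth_rw 1 [← hw.comp_sortingPerm]
  rw [← hw'.comp_sortingPerm, blockMinor_comp,
    smul_smul (Equiv.Perm.sign (sortingPerm w')), smul_comm, smul_smul, smul_smul]
  simp [Int.units_mul_self, mul_assoc]

theorem blockMinorLift_comp (g h : Equiv.Perm (Fin t × L)) :
    blockMinorLift k (r ∘ g) (c ∘ h) (Prod.snd ∘ g) (Prod.snd ∘ h) =
      Equiv.Perm.sign g • Equiv.Perm.sign h • varProd k r c := by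
  have hg := (isBalanced_snd.comp (L := L) (t := t) g).comp_sortingPerm
  have hh := (isBalanced_snd.comp (L := L) (t := t) h).comp_sortingPerm
  rw [blockMinorLift]
  set η := sortingPerm (Prod.snd ∘ g)
  set η' := sortingPerm (Prod.snd ∘ h)
  have := varProd_comp (k := k) r c (η := g * η) (η' := h * η') hg hh
  rw [Equiv.Perm.coe_mul, Equiv.Perm.coe_mul] at this
  rw [Function.comp_assoc, Function.comp_assoc, this]
  simp only [smul_smul, map_mul]
  congr 1
  generalize Equiv.Perm.sign g = s, Equiv.Perm.sign h = s', Equiv.Perm.sign η = u,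
    Equiv.Perm.sign η' = u'
  calc u * (u' * (s * u * (s' * u'))) = u * u * (u' * u') * (s * s') := by ac_rfl
    _ = s * s' := by simp only [Int.units_mul_self, one_mul]

/-- The products of a form of degree `d` with the variable whose rows are enumerated by `r` on `A`
and whose columns are enumerated by `c` on `B`. The intersection runs over all ways to order `A`
and `B`; they change the variable only by a sign. -/
noncomputable def varMultiples (k : Type*) [CommRing k] {ι : Type*} (r : ι → Fin m) (c : ι → Fin n)
    (d : ℕ) (A B : Finset ι) : Submodule k (MvPolynomial (MinorIndex t m n) k) :=
  ⨅ (α : Fin t ≃ A) (β : Fin t ≃ B), (homogeneousSubmodule _ k d).map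
    (LinearMap.mulLeft k (alternatingVar k (fun j => r (α j)) (fun j => c (β j))))

theorem blockMinorLift_mem_varMultiples {d : ℕ} (hL : Fintype.card L = d + 1)
    {w w' : Fin t × L → L} (hw : IsBalanced t w) (hw' : IsBalanced t w') (a : L) :
    blockMinorLift k r c w w' ∈ varMultiples k r c d (fiber w a) (fiber w' a) := by
  refine Submodule.mem_iInf _ |>.2 fun α => Submodule.mem_iInf _ |>.2 fun β => ?_
  set σ : Equiv.Perm (Fin t) := (fiberEquiv hw.comp_sortingPerm a).trans α.symm
  set τ : Equiv.Perm (Fin t) := (fiberEquiv hw'.comp_sortingPerm a).trans β.symm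
  have hvar : alternatingVar k (fun j => r (sortingPerm w (j, a)))
      (fun j => c (sortingPerm w' (j, a))) = Equiv.Perm.sign σ • Equiv.Perm.sign τ •
        alternatingVar k (fun j => r (α j)) (fun j => c (β j)) := by
    rw [← alternatingVar_comp]
    congr 1 <;> ext1 j <;> simp [σ, τ, fiberEquiv]
  rw [blockMinorLift, varProd, ← Finset.mul_prod_erase _ _ (Finset.mem_univ a)]
  refine Submodule.smul_of_tower_mem _ _ (Submodule.smul_of_tower_mem _ _ ?_)
  simp only [Function.comp_apply]
  rw [hvar, smul_mul_assoc, smul_mul_assoc]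
  refine Submodule.smul_of_tower_mem _ _ (Submodule.smul_of_tower_mem _ _
    (Submodule.mem_map_of_mem ?_))
  have := IsHomogeneous.prod (Finset.univ.erase a) (fun b => alternatingVar k
    (fun j => r (sortingPerm w (j, b))) (fun j => c (sortingPerm w' (j, b)))) (fun _ => 1)
    fun b _ => isHomogeneous_alternatingVar _ _
  simpa [hL] using this

theorem exists_lift_blockMinor {k : Type*} [Field k] [CharZero k] {d : ℕ}
    (hL : Fintype.card L = d + 1) {w w' : Fin t × L → L} {a b : L} (hw : HasRootWeight t a b w)
    (hw' : HasRootWeight t a b w') :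
    ∃ f, minorPresentation k t m n f = blockMinor k r c w w' ∧
      ∀ i, (fiber w i).card = t → f ∈ varMultiples k r c d (fiber w i) (fiber w' i) := by
  rcases eq_or_ne a b with rfl | hab
  · rw [hasRootWeight_self] at hw hw'
    exact ⟨blockMinorLift k r c w w', minorPresentation_blockMinorLift r c hw hw',
      fun i _ => blockMinorLift_mem_varMultiples r c hL hw hw' i⟩
  obtain ⟨e, he, he'⟩ := exists_sum_update_eq_ite (k := k) hab hw
  have hbal {j} (hj : j ∈ fiber w' a) : IsBalanced t (Function.update w' j b) :=
    (isBalanced_update_iff (mem_fiber.1 hj) hab).2 hw'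
  refine ⟨∑ u, e u • ∑ j ∈ fiber w' a, blockMinorLift k r c u (Function.update w' j b), ?_, ?_⟩
  · rw [← sum_smul_sum_blockMinor_update r c w w' he', map_sum]
    refine Finset.sum_congr rfl fun u _ => ?_
    rcases eq_or_ne (e u) 0 with h0 | h0
    · simp [h0]
    · rw [map_smul, map_sum]
      exact congrArg _ <| Finset.sum_congr rfl fun j hj =>
        minorPresentation_blockMinorLift r c (he u h0).1 (hbal hj)
  · intro i hi
    have hweight := hw i
    have hia : i ≠ a := by
      rintro rfl
      rw [if_neg hab, if_pos rfl] at hweight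
      lia
    have hib : i ≠ b := by
      rintro rfl
      rw [if_neg hab.symm, if_pos rfl] at hweight
      lia
    refine sum_mem fun u _ => ?_
    rcases eq_or_ne (e u) 0 with h0 | h0
    · simp [h0]
    refine Submodule.smul_mem _ _ (sum_mem fun j hj => ?_)
    rw [← (he u h0).2 i hia hib, ← fiber_update_of_ne_of_ne (mem_fiber.1 hj) hia hib]
    exact blockMinorLift_mem_varMultiples r c hL (he u h0).1 (hbal hj) i

end Lift

section Functional

variable {k L : Type*} [Field k] [DecidableEq L] [Fintype L] {t m n d : ℕ}

theorem apply_eq_of_mem_varMultiples {ι : Type*} {r : ι → Fin m} {c : ι → Fin n}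
    {ψ : MvPolynomial (MinorIndex t m n) k →ₗ[k] k}
    (hψ : ∀ q g, g.IsHomogeneous d → minorPresentation k t m n g = 0 → ψ (q * g) = 0)
    {A B : Finset ι} (hA : A.card = t) (hB : B.card = t) {f f' : MvPolynomial (MinorIndex t m n) k}
    (hf : f ∈ varMultiples k r c d A B) (hf' : f' ∈ varMultiples k r c d A B)
    (h : minorPresentation k t m n f = minorPresentation k t m n f') : ψ f = ψ f' := by
  let α := (A.equivFinOfCardEq hA).symm
  let β := (B.equivFinOfCardEq hB).symm
  obtain ⟨g, hg, hgf⟩ := Submodule.mem_iInf _ |>.1 (Submodule.mem_iInf _ |>.1 (sub_mem hf hf') α) β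
  rw [LinearMap.mulLeft_apply] at hgf
  rw [← sub_eq_zero, ← map_sub, ← hgf]
  rw [← sub_eq_zero, ← map_sub, ← hgf, map_mul, mul_eq_zero] at h
  rcases h with h | h
  · rw [alternatingVar_eq_zero_of_minorPresentation_eq_zero h, zero_mul, map_zero]
  · exact hψ _ g hg h

theorem commutesWithRecoloring_apply_lift {ψ : MvPolynomial (MinorIndex t m n) k →ₗ[k] k}
    (hψ : ∀ q g, g.IsHomogeneous d → minorPresentation k t m n g = 0 → ψ (q * g) = 0)
    (hL : 4 ≤ Fintype.card L) {r : Fin t × L → Fin m} {c : Fin t × L → Fin n}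
    {F : (Fin t × L → L) → (Fin t × L → L) → MvPolynomial (MinorIndex t m n) k}
    (hF : ∀ w w' a b, HasRootWeight t a b w → HasRootWeight t a b w' →
      minorPresentation k t m n (F w w') = blockMinor k r c w w' ∧
      ∀ i, (fiber w i).card = t → F w w' ∈ varMultiples k r c d (fiber w i) (fiber w' i)) :
    CommutesWithRecoloring t (Matrix.of fun w w' => ψ (F w w')) := by
  intro a a' b haa' u v hu hv
  obtain ⟨i, -, hi⟩ := Finset.exists_mem_notMem_of_card_lt_card
    ((Finset.card_le_three (a := a) (b := a') (c := b)).trans_lt hL)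
  simp only [Finset.mem_insert, Finset.mem_singleton, not_or] at hi
  obtain ⟨hia, hia', hib⟩ := hi
  have hiu : (fiber u i).card = t := by simpa [hia', hib] using hu i
  have hiv : (fiber v i).card = t := by simpa [hia, hib] using hv i
  have hleft {j} (hj : j ∈ fiber v a) := hF u _ a' b hu (hv.update (mem_fiber.1 hj) haa')
  have hright {j} (hj : j ∈ fiber u a') := hF _ v a b (hu.update (mem_fiber.1 hj) haa'.symm) hv
  rw [mul_recolorMatrix_apply, recolorMatrix_mul_apply]
  simp only [Matrix.of_apply]
  rw [← map_sum, ← map_sum]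
  refine apply_eq_of_mem_varMultiples (r := r) (c := c) hψ hiu hiv (sum_mem fun j hj => ?_)
    (sum_mem fun j hj => ?_) ?_
  · have := (hleft hj).2 i hiu
    rwa [fiber_update_of_ne_of_ne (mem_fiber.1 hj) hia hia'] at this
  · have hfiber := fiber_update_of_ne_of_ne (mem_fiber.1 hj) hia' hia
    have := (hright hj).2 i (hfiber ▸ hiu)
    rwa [hfiber] at this
  · rw [map_sum, map_sum, Finset.sum_congr rfl fun j hj => (hleft hj).1,
      Finset.sum_congr rfl fun j hj => (hright hj).1, sum_blockMinor_update]

theorem exists_apply_blockMinorLift_eq [CharZero k] {ψ : MvPolynomial (MinorIndex t m n) k →ₗ[k] k}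
    (hψ : ∀ q g, g.IsHomogeneous d → minorPresentation k t m n g = 0 → ψ (q * g) = 0)
    (hd : 3 ≤ d) (hL : Fintype.card L = d + 1) (r : Fin t × L → Fin m) (c : Fin t × L → Fin n) :
    ∃ a : Equiv.Perm (Fin t × L) → k, ∀ u v, IsBalanced t u → IsBalanced t v →
      ψ (blockMinorLift k r c u v) =
        ∑ σ : Equiv.Perm (Fin t × L), if u ∘ σ = v then a σ else 0 := by
  have hlift (w w' : Fin t × L → L) : ∃ f, ∀ a b, HasRootWeight t a b w → HasRootWeight t a b w' →
      minorPresentation k t m n f = blockMinor k r c w w' ∧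
      ∀ i, (fiber w i).card = t → f ∈ varMultiples k r c d (fiber w i) (fiber w' i) := by
    by_cases h : ∃ a b, HasRootWeight t a b w ∧ HasRootWeight t a b w'
    · obtain ⟨a, b, hw, hw'⟩ := h
      obtain ⟨f, hf⟩ := exists_lift_blockMinor (k := k) r c hL hw hw'
      exact ⟨f, fun _ _ _ _ => hf⟩
    · exact ⟨0, fun a b hw hw' => (h ⟨a, b, hw, hw'⟩).elim⟩
  choose F hF using hlift
  obtain ⟨x⟩ : Nonempty L := Fintype.card_pos_iff.1 (by lia)
  have : Nonempty L := ⟨x⟩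
  have hcomm := commutesWithRecoloring_apply_lift hψ (by lia) hF
  obtain ⟨a, ha⟩ := exists_coeff_of_commutesWithRecoloring hcomm
  refine ⟨a, fun u v hu hv => ?_⟩
  obtain ⟨hFπ, hFmem⟩ := hF u v x x (hasRootWeight_self.2 hu) (hasRootWeight_self.2 hv)
  rw [← ha u v hu hv]
  exact apply_eq_of_mem_varMultiples hψ (hu x) (hv x)
    (blockMinorLift_mem_varMultiples r c hL hu hv x) (hFmem x (hu x))
    ((minorPresentation_blockMinorLift r c hu hv).trans hFπ.symm)

end Functional

/-! ### Averaging over place permutations -/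

section SignedSum

theorem sum_sum_mul_mul {G M : Type*} [Group G] [Fintype G] [AddCommMonoid M] (F : G → G → M)
    (x : G) : ∑ η, ∑ g, F (η * g) (g * x) = ∑ g, ∑ h, F g h := by
  have hη (g : G) : ∑ η, F (η * g) (g * x) = ∑ η, F η (g * x) :=
    Equiv.sum_comp (Equiv.mulRight g) fun η => F η (g * x)
  rw [Finset.sum_comm, Finset.sum_congr rfl fun g _ => hη g, Finset.sum_comm]
  exact Finset.sum_congr rfl fun η _ => Equiv.sum_comp (Equiv.mulRight x) (F η)

variable {k ι L P Q : Type*} [Fintype ι] [DecidableEq ι]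

/-- The signed coefficients `a r c σ`, summed over all permutations `σ` and all rearrangements of
the word `p` of pairs, where a rearranged word is read as `fun i => (r (σ i), c i)`. The sum does
not depend on the order of the letters of `p`. -/
def signedSum [AddCommGroup k] (a : (ι → P) → (ι → Q) → Equiv.Perm ι → k) (p : ι → P × Q) : k :=
  ∑ σ : Equiv.Perm ι, ∑ g : Equiv.Perm ι,
    Equiv.Perm.sign σ • a (Prod.fst ∘ p ∘ g) (Prod.snd ∘ p ∘ ⇑(g * σ)) σ

theorem signedSum_comp [AddCommGroup k] (a : (ι → P) → (ι → Q) → Equiv.Perm ι → k) (p : ι → P × Q)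
    (τ : Equiv.Perm ι) : signedSum a (p ∘ τ) = signedSum a p :=
  Finset.sum_congr rfl fun σ _ => Equiv.sum_comp (Equiv.mulLeft τ) fun g =>
    Equiv.Perm.sign σ • a (Prod.fst ∘ p ∘ g) (Prod.snd ∘ p ∘ ⇑(g * σ)) σ

-- The triples `(η, g, σ)` with `s ∘ η = s` and `(g, h, σ)` with `s ∘ g ∘ σ = s ∘ h` correspond to
-- each other under `(η, g, σ) ↦ (η * g, g * σ, σ)`.
theorem sum_sign_smul_signedSum [AddCommGroup k] [DecidableEq L] (s : ι → L)
    (a : (ι → P) → (ι → Q) → Equiv.Perm ι → k) (r : ι → P) (c : ι → Q) :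
    (∑ η : Equiv.Perm ι,
      if s ∘ η = s then Equiv.Perm.sign η • signedSum a (fun i => (r (η i), c i)) else 0) =
    ∑ σ : Equiv.Perm ι, ∑ g : Equiv.Perm ι, ∑ h : Equiv.Perm ι,
      if (s ∘ g) ∘ σ = s ∘ h then
        Equiv.Perm.sign g • Equiv.Perm.sign h • a (r ∘ g) (c ∘ h) σ else 0 := by
  have hterm (η g σ : Equiv.Perm ι) :
      (if (s ∘ ⇑(η * g)) ∘ σ = s ∘ ⇑(g * σ) then
        Equiv.Perm.sign (η * g) • Equiv.Perm.sign (g * σ) • a (r ∘ ⇑(η * g)) (c ∘ ⇑(g * σ)) σ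
        else 0) = if s ∘ η = s then
          Equiv.Perm.sign η • Equiv.Perm.sign σ • a (r ∘ ⇑(η * g)) (c ∘ ⇑(g * σ)) σ else 0 := by
    have hiff : (s ∘ ⇑(η * g)) ∘ σ = s ∘ ⇑(g * σ) ↔ s ∘ η = s :=
      (g * σ).surjective.right_cancellable (g₁ := s ∘ η) (g₂ := s)
    rw [if_congr hiff rfl rfl, map_mul, map_mul, smul_smul, smul_smul, mul_assoc,
      ← mul_assoc (Equiv.Perm.sign g), Int.units_mul_self, one_mul]
  have hreindex (σ : Equiv.Perm ι) := sum_sum_mul_mul (fun g h : Equiv.Perm ι =>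
    if (s ∘ g) ∘ σ = s ∘ h then
      Equiv.Perm.sign g • Equiv.Perm.sign h • a (r ∘ g) (c ∘ h) σ else 0) σ
  simp only [← hreindex, hterm]
  rw [Finset.sum_comm]
  refine Finset.sum_congr rfl fun η _ => ?_
  split_ifs
  · simp only [signedSum, Finset.smul_sum]
    rfl
  · simp only [Finset.sum_const_zero]

theorem exists_eq_sum_sign_smul [Field k] [CharZero k] [DecidableEq L] {s : ι → L}
    {Φ : (ι → P) → (ι → Q) → k} {a : (ι → P) → (ι → Q) → Equiv.Perm ι → k}
    (hΦ : ∀ r c (g h : Equiv.Perm ι), Equiv.Perm.sign g • Equiv.Perm.sign h • Φ r c =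
      ∑ σ : Equiv.Perm ι, if (s ∘ g) ∘ σ = s ∘ h then a (r ∘ g) (c ∘ h) σ else 0) :
    ∃ B : (ι → P × Q) → k, (∀ p (τ : Equiv.Perm ι), B (p ∘ τ) = B p) ∧
      ∀ r c, Φ r c = ∑ η : Equiv.Perm ι,
        if s ∘ η = s then Equiv.Perm.sign η • B (fun i => (r (η i), c i)) else 0 := by
  set N : k := (Fintype.card (Equiv.Perm ι) : k)
  have hN : N * N ≠ 0 := mul_self_ne_zero.2 (Nat.cast_ne_zero.2 Fintype.card_ne_zero)
  refine ⟨fun p => (N * N)⁻¹ * signedSum a p, fun p τ => by simp only [signedSum_comp],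
    fun r c => ?_⟩
  have hterm (g h : Equiv.Perm ι) : Φ r c = ∑ σ : Equiv.Perm ι, if (s ∘ g) ∘ σ = s ∘ h then
      Equiv.Perm.sign g • Equiv.Perm.sign h • a (r ∘ g) (c ∘ h) σ else 0 := by
    have hinv : Φ r c = Equiv.Perm.sign g • Equiv.Perm.sign h • Equiv.Perm.sign g •
        Equiv.Perm.sign h • Φ r c := by
      rw [smul_comm (Equiv.Perm.sign h), smul_smul, Int.units_mul_self, one_smul, smul_smul,
        Int.units_mul_self, one_smul]
    rw [hinv, hΦ]
    simp only [Finset.smul_sum, smul_ite, smul_zero]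
  have hsum : N * N * Φ r c = ∑ η : Equiv.Perm ι,
      if s ∘ η = s then Equiv.Perm.sign η • signedSum a (fun i => (r (η i), c i)) else 0 := by
    calc N * N * Φ r c = ∑ _g : Equiv.Perm ι, ∑ _h : Equiv.Perm ι, Φ r c := by simp [N, mul_assoc]
      _ = _ := by
        rw [sum_sign_smul_signedSum, ← Finset.sum_comm_cycle]
        exact Finset.sum_congr rfl fun g _ => Finset.sum_congr rfl fun h _ => hterm g h
  rw [← inv_mul_cancel_left₀ hN (Φ r c), hsum, Finset.mul_sum]
  simp only [mul_ite, mul_zero, mul_smul_comm]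

end SignedSum

theorem exists_linearMap_prod_X_eq {k σ ι : Type*} [CommSemiring k] [Fintype ι]
    {B : (ι → σ) → k} (hB : ∀ p (τ : Equiv.Perm ι), B (p ∘ τ) = B p) :
    ∃ β : MvPolynomial σ k →ₗ[k] k, ∀ p : ι → σ, β (∏ i, X (p i)) = B p := by
  classical
  let e (p : ι → σ) : σ →₀ ℕ := ∑ i, Finsupp.single (p i) 1
  have he (p) (x : σ) : e p x = (fiber p x).card := by
    simp [e, Finsupp.finsetSum_apply, Finsupp.single_apply, fiber]
  have hfactors : B.FactorsThrough e := fun p q hpq => by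
    obtain ⟨τ, rfl⟩ := exists_comp_eq_of_card_fiber_eq (u := p) (v := q) fun x => by
      rw [← he, ← he, hpq]
    exact (hB p τ).symm
  refine ⟨(basisMonomials σ k).constr k (Function.extend e B 0), fun p => ?_⟩
  have hprod : ∏ i, X (p i) = basisMonomials σ k (e p) := by
    simp [e, X, monomial_sum_one]
  rw [hprod, Module.Basis.constr_basis, hfactors.extend_apply]

/-! ### Generation in degrees at most three -/

theorem exists_apply_varProd_eq {k L : Type*} [Field k] [CharZero k] [Fintype L] {t m n d : ℕ}
    {ψ : MvPolynomial (MinorIndex t m n) k →ₗ[k] k}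
    (hψ : ∀ q g, g.IsHomogeneous d → minorPresentation k t m n g = 0 → ψ (q * g) = 0)
    (hd : 3 ≤ d) (hL : Fintype.card L = d + 1) :
    ∃ β : MvPolynomial (Fin m × Fin n) k →ₗ[k] k,
      ∀ (r : Fin t × L → Fin m) (c : Fin t × L → Fin n), ψ (varProd k r c) =
        β (minorPresentation k t m n (varProd k r c)) := by
  classical
  choose a ha using exists_apply_blockMinorLift_eq (L := L) hψ hd hL
  obtain ⟨B, hBperm, hB⟩ := exists_eq_sum_sign_smul (s := Prod.snd)
    (Φ := fun r c => ψ (varProd k r c)) (a := a) fun r c g h => by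
      rw [← ha _ _ _ _ (isBalanced_snd.comp g) (isBalanced_snd.comp h), blockMinorLift_comp]
      simp only [LinearMap.map_smul_of_tower]
  obtain ⟨β, hβ⟩ := exists_linearMap_prod_X_eq hBperm
  refine ⟨β, fun r c => ?_⟩
  rw [hB, minorPresentation_varProd, blockMinor_eq_sum, map_sum]
  refine Finset.sum_congr rfl fun σ _ => ?_
  rw [apply_ite β, map_zero, LinearMap.map_smul_of_tower, hβ]

theorem apply_eq_zero_of_minorPresentation_eq_zero {k : Type*} [Field k] [CharZero k] {t m n d : ℕ}
    {ψ : MvPolynomial (MinorIndex t m n) k →ₗ[k] k}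
    (hψ : ∀ q g, g.IsHomogeneous d → minorPresentation k t m n g = 0 → ψ (q * g) = 0)
    (hd : 3 ≤ d) {p : MvPolynomial (MinorIndex t m n) k} (hp : p.IsHomogeneous (d + 1))
    (hp0 : minorPresentation k t m n p = 0) : ψ p = 0 := by
  obtain ⟨β, hβ⟩ := exists_apply_varProd_eq hψ hd (Fintype.card_fin (d + 1))
  have hspan : p ∈ Submodule.span k (Set.range fun rc : (Fin t × Fin (d + 1) → Fin m) ×
      (Fin t × Fin (d + 1) → Fin n) => varProd k rc.1 rc.2) :=
    homogeneousSubmodule_le_span_varProd (by rwa [Fintype.card_fin])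
  have heq : Set.EqOn ψ (β ∘ₗ (minorPresentation k t m n).toLinearMap)
      (Submodule.span k (Set.range fun rc : (Fin t × Fin (d + 1) → Fin m) ×
        (Fin t × Fin (d + 1) → Fin n) => varProd k rc.1 rc.2)) :=
    LinearMap.eqOn_span' (by rintro _ ⟨⟨r, c⟩, rfl⟩; exact hβ r c)
  rw [heq hspan, LinearMap.comp_apply, AlgHom.toLinearMap_apply, hp0, map_zero]

section Degree

theorem homogeneousComponent_aeval {k σ τ : Type*} [CommSemiring k] {g : σ → MvPolynomial τ k}
    {t : ℕ} (ht : t ≠ 0) (hg : ∀ i, (g i).IsHomogeneous t) (d : ℕ) (p : MvPolynomial σ k) :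
    homogeneousComponent (t * d) (aeval g p) = aeval g (homogeneousComponent d p) := by
  induction p using induction_on' with
  | monomial s a =>
    have hs : (monomial s a).IsHomogeneous s.degree := isHomogeneous_monomial a rfl
    rw [homogeneousComponent_of_mem hs, homogeneousComponent_of_mem (hs.aeval g hg),
      apply_ite (aeval g), map_zero]
    exact if_congr (Nat.mul_right_inj ht) rfl rfl
  | add p q hp hq => simp only [map_add, hp, hq]

theorem generatedInDegreesLE_of_forall_linearMap {k σ : Type*} [Field k]
    {I : Ideal (MvPolynomial σ k)} {D : ℕ}
    (hcomp : ∀ p ∈ I, ∀ d, homogeneousComponent d p ∈ I)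
    (hI : ∀ d, D ≤ d → ∀ ψ : MvPolynomial σ k →ₗ[k] k,
      (∀ q, ∀ g ∈ I, g.IsHomogeneous d → ψ (q * g) = 0) →
      ∀ p ∈ I, p.IsHomogeneous (d + 1) → ψ p = 0) :
    GeneratedInDegreesLE I D := by
  set J := Ideal.span {x | x ∈ I ∧ x.totalDegree ≤ D}
  have hlow {p} (hp : p ∈ I) {d} (hpd : p.IsHomogeneous d) (hd : d ≤ D) : p ∈ J :=
    Ideal.subset_span ⟨hp, hpd.totalDegree_le.trans hd⟩
  have hhom (d) : ∀ p ∈ I, p.IsHomogeneous d → p ∈ J := by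
    induction d with
    | zero => exact fun p hp hpd => hlow hp hpd D.zero_le
    | succ d ih =>
      intro p hp hpd
      rcases Nat.lt_or_ge d D with hd | hd
      · exact hlow hp hpd hd
      by_contra hpJ
      obtain ⟨ψ, hψp, hψJ⟩ :=
        Submodule.exists_le_ker_of_notMem (p := J.restrictScalars k) (v := p) hpJ
      exact hψp (hI d hd ψ (fun q g hg hgd => hψJ (J.mul_mem_left q (ih g hg hgd))) p hp hpd)
  refine le_antisymm (fun p hp => ?_) (Ideal.span_le.2 fun x hx => hx.1)
  rw [← sum_homogeneousComponent p]
  exact Ideal.sum_mem _ fun d _ =>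
    hhom d _ (hcomp p hp d) (homogeneousComponent_isHomogeneous d p)

theorem generatedInDegreesLE_bot {k σ : Type*} [CommRing k] (D : ℕ) :
    GeneratedInDegreesLE (⊥ : Ideal (MvPolynomial σ k)) D :=
  (Ideal.span_eq_bot.2 fun _ hx => hx.1).symm

end Degree

section Relations

variable {k : Type*} [CommRing k] {t m n : ℕ}

theorem mem_minorRelations {p : MvPolynomial (MinorIndex t m n) k} :
    p ∈ minorRelations k t m n ↔ minorPresentation k t m n p = 0 :=
  Iff.rfl

theorem isHomogeneous_genericMinor {I : Finset (Fin m)} {J : Finset (Fin n)}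
    (hI : I.card = t) (hJ : J.card = t) : (genericMinor k m n t I J hI hJ).IsHomogeneous t := by
  rw [genericMinor, Matrix.det_apply]
  refine IsHomogeneous.sum _ _ _ fun σ _ => ?_
  refine Submodule.smul_of_tower_mem (homogeneousSubmodule _ k t) _ ?_
  simpa using IsHomogeneous.prod (Finset.univ : Finset (Fin t)) _ (fun _ => 1)
    fun i _ => isHomogeneous_X k _

theorem homogeneousComponent_mem_minorRelations (ht : t ≠ 0)
    {p : MvPolynomial (MinorIndex t m n) k} (hp : p ∈ minorRelations k t m n) (d : ℕ) :
    homogeneousComponent d p ∈ minorRelations k t m n := by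
  rw [mem_minorRelations] at hp ⊢
  rw [minorPresentation] at hp ⊢
  rw [← homogeneousComponent_aeval ht fun _ => isHomogeneous_genericMinor _ _, hp, map_zero]

theorem injective_minorPresentation_one : Function.Injective (minorPresentation k 1 m n) := by
  let φ (p : MinorIndex 1 m n) : Fin m × Fin n :=
    (p.1.1.orderEmbOfFin p.2.1 0, p.1.2.orderEmbOfFin p.2.2 0)
  have hsingleton {s : ℕ} {I : Finset (Fin s)} (hI : I.card = 1) :
      I = {I.orderEmbOfFin hI 0} := by
    simpa using (Finset.image_orderEmbOfFin_univ I hI).symm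
  have hφ : Function.Injective φ := by
    rintro ⟨⟨I, J⟩, hI, hJ⟩ ⟨⟨I', J'⟩, hI', hJ'⟩ h
    refine Subtype.ext (Prod.ext ?_ ?_)
    · rw [hsingleton hI, hsingleton hI']
      exact congrArg _ (congrArg Prod.fst h)
    · rw [hsingleton hJ, hsingleton hJ']
      exact congrArg _ (congrArg Prod.snd h)
  have : minorPresentation k 1 m n = rename φ := by
    ext1 p
    rw [minorPresentation_X, rename_X, genericMinor, Matrix.det_fin_one, Matrix.of_apply]
    rfl
  rw [this]
  exact rename_injective φ hφ

end Relations

theorem minorRelations_one (k : Type*) [CommRing k] (m n : ℕ) : minorRelations k 1 m n = ⊥ :=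
  (RingHom.injective_iff_ker_eq_bot _).1 injective_minorPresentation_one

theorem minorRelations_degree_bound_general (k : Type*) [Field k] [CharZero k] (t m n D : ℕ)
    (ht : 1 ≤ t) (hD : 2 ≤ t → 3 ≤ D) : GeneratedInDegreesLE (minorRelations k t m n) D := by
  obtain rfl | ht2 := ht.eq_or_lt
  · rw [minorRelations_one]
    exact generatedInDegreesLE_bot D
  · exact generatedInDegreesLE_of_forall_linearMap
      (fun p hp => homogeneousComponent_mem_minorRelations (by lia) hp)
      fun d hd ψ hψ p hp hpd => apply_eq_zero_of_minorPresentation_eq_zero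
        (fun q g hgd hg => hψ q g hg hgd) ((hD ht2).trans hd) hpd hp

theorem three_le_degree_bound {t m : ℕ} (ht : 2 ≤ t) (htm : t ≤ m) :
    3 ≤ m * (m + t) - m - m ^ 2 / t + 1 := by
  have hdiv : m ^ 2 / t ≤ m ^ 2 := Nat.div_le_self _ _
  have hmul : m * 2 ≤ m * t := Nat.mul_le_mul_left m ht
  rw [mul_add, ← sq]
  lia

/-- Every minimal generator of the ideal of relations of the `t`-minors of a generic
`m × n` matrix has degree at most `m(m+t) − m − ⌊m²/t⌋ + 1`. -/
theorem minorRelations_degree_bound (k : Type*) [Field k] [CharZero k]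
    (t m n : ℕ) (ht : 1 ≤ t) (htm : t ≤ m) (hmn : m ≤ n) :
    GeneratedInDegreesLE (minorRelations k t m n) (m * (m + t) - m - m ^ 2 / t + 1) :=
  minorRelations_degree_bound_general k t m n _ ht fun ht2 => three_le_degree_bound ht2 htm
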